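/- Let T be a weakly irreducible nonnegative tensor of order m ≥ 2 and dimension n ≥ 2. Then there exist λ ∈ ℝ and a vector x ∈ ℝ^n with all components positive such that (T x^{m-1})_i = λ x_i^{m-1} for all i; moreover, this positive eigenpair is unique up to scaling of the eigenvector: if (μ, y) is any other pair with y having all components positive and (T y^{m-1})_i = μ y_i^{m-1} for all i, then μ = λ and y = c x for some constant c > 0. -/

import Mathlib

open Finset

/-- `(T x^{m-1})_i` for an order-`(k+1)` tensor encoded by its first index
and the `k` trailing indices (so for an order-`m` tensor, `k = m - 1`). -/
def tapp {ι : Type*} [Fintype ι] {k : ℕ} (T : ι → (Fin k → ι) → ℝ) (x : ι → ℝ) (i : ι) : ℝ :=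
  ∑ β : Fin k → ι, T i β * ∏ l, x (β l)

/-- All entries of the tensor are nonnegative. -/
def TNonneg {ι : Type*} {k : ℕ} (T : ι → (Fin k → ι) → ℝ) : Prop :=
  ∀ i β, 0 ≤ T i β

/-- `T` is strictly nonnegative: nonnegative, and `T x^{m-1} > 0` whenever `x > 0`. -/
def TStrictlyNonneg {ι : Type*} [Fintype ι] {k : ℕ} (T : ι → (Fin k → ι) → ℝ) : Prop :=
  TNonneg T ∧ ∀ x : ι → ℝ, (∀ i, 0 < x i) → ∀ i, 0 < tapp T x i

/-- Representation matrix `G(T)`: `G(T)_{ij}` is the sum of all `T_{i i₂…i_m}` with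
`j ∈ {i₂,…,i_m}`. -/
def repMat {ι : Type*} [Fintype ι] [DecidableEq ι] {k : ℕ}
    (T : ι → (Fin k → ι) → ℝ) : Matrix ι ι ℝ :=
  fun i j => ∑ β : Fin k → ι, if ∃ l, β l = j then T i β else 0

/-- Majorization matrix `M(T)`: `M(T)_{ij} = T_{i j j … j}`. -/
def majMat {ι : Type*} {k : ℕ} (T : ι → (Fin k → ι) → ℝ) : Matrix ι ι ℝ :=
  fun i j => T i (fun _ => j)

/-- A square matrix is reducible if some nonempty proper index subset `I` satisfies
`A i j = 0` for all `i ∈ I`, `j ∉ I`. -/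
def MatReducible {ι : Type*} [Fintype ι] (A : Matrix ι ι ℝ) : Prop :=
  ∃ I : Finset ι, I.Nonempty ∧ I ≠ Finset.univ ∧ ∀ i ∈ I, ∀ j ∉ I, A i j = 0

def MatIrreducible {ι : Type*} [Fintype ι] (A : Matrix ι ι ℝ) : Prop :=
  ¬ MatReducible A

/-- A square nonnegative matrix is primitive if some positive power is entrywise positive. -/
def MatPrimitive {ι : Type*} [Fintype ι] [DecidableEq ι] (A : Matrix ι ι ℝ) : Prop :=
  ∃ p : ℕ, 0 < p ∧ ∀ i j, 0 < (A ^ p) i j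

/-- `lam ∈ ℂ` is an eigenvalue of `T`:
`(T x^{m-1})_i = lam * x_i^{m-1}` for some nonzero `x ∈ ℂⁿ`. -/
def TIsEig {ι : Type*} [Fintype ι] {k : ℕ} (T : ι → (Fin k → ι) → ℝ) (lam : ℂ) : Prop :=
  ∃ x : ι → ℂ, x ≠ 0 ∧
    ∀ i, (∑ β : Fin k → ι, (T i β : ℂ) * ∏ l, x (β l)) = lam * x i ^ k

/-- Spectral radius: the supremum of moduli of eigenvalues. -/
noncomputable def specRad {ι : Type*} [Fintype ι] {k : ℕ}
    (T : ι → (Fin k → ι) → ℝ) : ℝ :=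
  sSup {r : ℝ | ∃ lam : ℂ, TIsEig T lam ∧ r = ‖lam‖}

/-- Induced tensor `T_I` on a subset `I` of the index set. -/
def inducedT {ι : Type*} {k : ℕ} (T : ι → (Fin k → ι) → ℝ) (I : Finset ι) :
    {i // i ∈ I} → (Fin k → {i // i ∈ I}) → ℝ :=
  fun i β => T i.val (fun l => (β l).val)

/-- The identity tensor: `E_{i₁…i_m} = 1` if all indices coincide, `0` otherwise. -/
def idT (ι : Type*) [DecidableEq ι] (k : ℕ) : ι → (Fin k → ι) → ℝ :=
  fun i β => if ∀ l, β l = i then 1 else 0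

/-- A tensor is reducible if some nonempty proper index subset `I` satisfies
`T_{i₁ i₂ … i_m} = 0` for all `i₁ ∈ I` and `i₂, …, i_m ∉ I`. -/
def TReducible {ι : Type*} [Fintype ι] {k : ℕ} (T : ι → (Fin k → ι) → ℝ) : Prop :=
  ∃ I : Finset ι, I.Nonempty ∧ I ≠ Finset.univ ∧
    ∀ i ∈ I, ∀ β : Fin k → ι, (∀ l, β l ∉ I) → T i β = 0

/-- The map `F_T(x)_i = ((T x^{m-1})_i)^{1/(m-1)}` (here `k = m - 1`). -/
noncomputable def FT {ι : Type*} [Fintype ι] {k : ℕ}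
    (T : ι → (Fin k → ι) → ℝ) (x : ι → ℝ) : ι → ℝ :=
  fun i => (tapp T x i) ^ ((k : ℝ)⁻¹)

/-- A tensor is primitive if some iterate of `F_T` is entrywise positive on every
nonzero nonnegative vector. -/
def TPrimitive {ι : Type*} [Fintype ι] {k : ℕ} (T : ι → (Fin k → ι) → ℝ) : Prop :=
  ∃ p : ℕ, 0 < p ∧ ∀ x : ι → ℝ, (∀ i, 0 ≤ x i) → x ≠ 0 → ∀ i, 0 < (FT T)^[p] x i

/-- `T` is weakly positive: all off-diagonal entries of `M(T)` are positive. -/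
def TWeaklyPositive {ι : Type*} {k : ℕ} (T : ι → (Fin k → ι) → ℝ) : Prop :=
  ∀ i j, i ≠ j → 0 < T i (fun _ => j)

/-- `T` is essentially positive: `T x^{m-1} > 0` for every nonzero `x ≥ 0`. -/
def TEssentiallyPositive {ι : Type*} [Fintype ι] {k : ℕ} (T : ι → (Fin k → ι) → ℝ) : Prop :=
  ∀ x : ι → ℝ, (∀ i, 0 ≤ x i) → x ≠ 0 → ∀ i, 0 < tapp T x i

/-- Hilbert's projective metric between two positive vectors:
`d(u,v) = log (max_i v_i/u_i) - log (min_i v_i/u_i)`. -/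
noncomputable def hilbertD {n : ℕ} (hn : 0 < n) (u v : Fin n → ℝ) : ℝ :=
  Real.log ((Finset.univ : Finset (Fin n)).sup' ⟨⟨0, hn⟩, Finset.mem_univ _⟩
      (fun i => v i / u i)) -
  Real.log ((Finset.univ : Finset (Fin n)).inf' ⟨⟨0, hn⟩, Finset.mem_univ _⟩
      (fun i => v i / u i))


section Helpers
variable {n k : ℕ}

lemma wi_edge {T : Fin n → (Fin k → Fin n) → ℝ} (hT : TNonneg T)
    (hwi : MatIrreducible (repMat T)) (I : Finset (Fin n)) (hI : I.Nonempty)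
    (hI' : I ≠ Finset.univ) : ∃ i ∈ I, ∃ β, 0 < T i β ∧ ∃ l, β l ∉ I := by
  by_contra hcon
  push Not at hcon
  refine hwi ⟨I, hI, hI', fun i hi j hj => ?_⟩
  unfold repMat
  refine Finset.sum_eq_zero fun β _ => ?_
  split_ifs with h
  · obtain ⟨l, hl⟩ := h
    rcases (hT i β).eq_or_lt with h0 | h0
    · exact h0.symm
    · exact absurd (hcon i hi β h0 l) (hl ▸ hj)
  · rfl

lemma tapp_smul (T : Fin n → (Fin k → Fin n) → ℝ) (c : ℝ) (x : Fin n → ℝ) (i : Fin n) :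
    tapp T (fun j => c * x j) i = c ^ k * tapp T x i := by
  unfold tapp
  rw [Finset.mul_sum]
  refine Finset.sum_congr rfl fun β _ => ?_
  rw [Finset.prod_mul_distrib]
  simp
  ring

lemma tapp_mono {T : Fin n → (Fin k → Fin n) → ℝ} (hT : TNonneg T) {x y : Fin n → ℝ}
    (hx : ∀ i, 0 < x i) (hxy : ∀ i, x i ≤ y i) (i : Fin n) : tapp T x i ≤ tapp T y i := by
  refine Finset.sum_le_sum fun β _ => mul_le_mul_of_nonneg_left ?_ (hT i β)
  exact Finset.prod_le_prod (fun l _ => (hx _).le) (fun l _ => hxy _)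

lemma tapp_strict {T : Fin n → (Fin k → Fin n) → ℝ} (hT : TNonneg T) {x y : Fin n → ℝ}
    (hx : ∀ i, 0 < x i) (hxy : ∀ i, x i ≤ y i) (i : Fin n) (β : Fin k → Fin n)
    (hβ : 0 < T i β) (l : Fin k) (hl : x (β l) < y (β l)) : tapp T x i < tapp T y i := by
  refine Finset.sum_lt_sum (fun β _ => mul_le_mul_of_nonneg_left ?_ (hT i β))
    ⟨β, Finset.mem_univ _, mul_lt_mul_of_pos_left ?_ hβ⟩
  · exact Finset.prod_le_prod (fun l _ => (hx _).le) (fun l _ => hxy _)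
  · exact Finset.prod_lt_prod (fun l _ => hx _) (fun l _ => hxy _) ⟨l, Finset.mem_univ _, hl⟩

lemma tapp_nonneg {T : Fin n → (Fin k → Fin n) → ℝ} (hT : TNonneg T) {x : Fin n → ℝ}
    (hx : ∀ i, 0 < x i) (i : Fin n) : 0 ≤ tapp T x i :=
  Finset.sum_nonneg fun β _ => mul_nonneg (hT i β) (Finset.prod_nonneg fun l _ => (hx _).le)

lemma tapp_cont (T : Fin n → (Fin k → Fin n) → ℝ) (i : Fin n) :
    Continuous (fun x : Fin n → ℝ => tapp T x i) := by
  unfold tapp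
  fun_prop

/-- Entries bigger than a positive constant. -/
lemma exists_min_entry (T : Fin n → (Fin k → Fin n) → ℝ) :
    ∃ t : ℝ, 0 < t ∧ ∀ i β, 0 < T i β → t ≤ T i β := by
  have h : ∀ᶠ t in nhdsWithin (0:ℝ) (Set.Ioi 0), ∀ i β, 0 < T i β → t ≤ T i β := by
    rw [Filter.eventually_all]
    intro i
    rw [Filter.eventually_all]
    intro β
    by_cases hp : 0 < T i β
    · filter_upwards [Ioo_mem_nhdsGT hp] with t ht _
      exact ht.2.le
    · exact Filter.Eventually.of_forall fun t h => absurd h hp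
  obtain ⟨t, h1, h2⟩ := (h.and self_mem_nhdsWithin).exists
  exact ⟨t, h2, h1⟩

lemma bound_step {T : Fin n → (Fin k → Fin n) → ℝ} (hT : TNonneg T)
    (hwi : MatIrreducible (repMat T)) (C : ℝ) (hC : 0 ≤ C) (r : ℕ) :
    ∃ A : ℝ, 1 ≤ A ∧ ∀ x : Fin n → ℝ, (∀ i, 1 ≤ x i) → (∃ i, x i = 1) →
      (∀ i, tapp T x i ≤ C * x i ^ k) →
      (∀ i, x i ≤ A) ∨ r + 1 ≤ (Finset.univ.filter (fun i => x i ≤ A)).card := by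
  obtain ⟨t, ht, htT⟩ := exists_min_entry T
  induction r with
  | zero =>
    refine ⟨1, le_rfl, fun x _ ⟨i, hi⟩ _ => Or.inr ?_⟩
    exact Finset.card_pos.2 ⟨i, by simp [hi]⟩
  | succ r ih =>
    obtain ⟨A, hA, h⟩ := ih
    refine ⟨max A (C * A ^ k / t), hA.trans (le_max_left _ _), fun x hx1 hx2 hx3 => ?_⟩
    rcases h x hx1 hx2 hx3 with h | h
    · exact Or.inl fun i => (h i).trans (le_max_left _ _)
    by_cases hall : ∀ i, x i ≤ A
    · exact Or.inl fun i => (hall i).trans (le_max_left _ _)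
    right
    push Not at hall
    obtain ⟨j0, hj0⟩ := hall
    set I := Finset.univ.filter (fun i => x i ≤ A) with hI
    obtain ⟨i, hi, β, hβ, l, hl⟩ := wi_edge hT hwi I
      (Finset.card_pos.1 (by omega)) (fun hh => by
        have : j0 ∈ I := hh ▸ Finset.mem_univ _
        rw [hI, Finset.mem_filter] at this
        linarith [this.2])
    have hxi : x i ≤ A := (Finset.mem_filter.1 hi).2
    have hxl : x (β l) ≤ C * A ^ k / t := by
      rw [le_div_iff₀ ht]
      have e1 : x (β l) ≤ ∏ l, x (β l) := by
        rw [← Finset.mul_prod_erase Finset.univ (fun l => x (β l)) (Finset.mem_univ l)]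
        refine le_mul_of_one_le_right (by linarith [hx1 (β l)]) ?_
        exact Finset.prod_induction _ (fun r : ℝ => 1 ≤ r)
          (fun a b ha hb => one_le_mul_of_one_le_of_one_le ha hb) le_rfl (fun l _ => hx1 _)
      have e2 : T i β * ∏ l, x (β l) ≤ tapp T x i :=
        Finset.single_le_sum (f := fun β => T i β * ∏ l, x (β l))
          (fun β _ => mul_nonneg (hT i β)
            (Finset.prod_nonneg fun l _ => by linarith [hx1 (β l)])) (Finset.mem_univ β)
      have e3 : x i ^ k ≤ A ^ k := pow_le_pow_left₀ (by linarith [hx1 i]) hxi k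
      calc x (β l) * t = t * x (β l) := mul_comm _ _
        _ ≤ T i β * ∏ l, x (β l) :=
          mul_le_mul (htT i β hβ) e1 (by linarith [hx1 (β l)]) hβ.le
        _ ≤ tapp T x i := e2
        _ ≤ C * x i ^ k := hx3 i
        _ ≤ C * A ^ k := mul_le_mul_of_nonneg_left e3 hC
    have hsub : insert (β l) I ⊆
        Finset.univ.filter (fun i => x i ≤ max A (C * A ^ k / t)) := by
      intro a ha
      rw [Finset.mem_insert] at ha
      rw [Finset.mem_filter]
      refine ⟨Finset.mem_univ _, ?_⟩
      rcases ha with rfl | ha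
      · exact hxl.trans (le_max_right _ _)
      · exact (Finset.mem_filter.1 ha).2.trans (le_max_left _ _)
    have := Finset.card_le_card hsub
    rw [Finset.card_insert_of_notMem hl] at this
    omega

lemma bound_all {T : Fin n → (Fin k → Fin n) → ℝ} (hT : TNonneg T)
    (hwi : MatIrreducible (repMat T)) (C : ℝ) (hC : 0 ≤ C) :
    ∃ A : ℝ, 1 ≤ A ∧ ∀ x : Fin n → ℝ, (∀ i, 1 ≤ x i) → (∃ i, x i = 1) →
      (∀ i, tapp T x i ≤ C * x i ^ k) → ∀ i, x i ≤ A := by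
  obtain ⟨A, hA, h⟩ := bound_step hT hwi C hC n
  refine ⟨A, hA, fun x h1 h2 h3 => (h x h1 h2 h3).resolve_right fun hc => ?_⟩
  have := (Finset.card_le_univ (Finset.univ.filter (fun i => x i ≤ A)))
  rw [Fintype.card_fin] at this
  omega

/-- The optimal Collatz-Wielandt value is attained. -/
lemma exists_min {T : Fin n → (Fin k → Fin n) → ℝ} (hn : 0 < n) (hT : TNonneg T)
    (hwi : MatIrreducible (repMat T)) :
    ∃ lam : ℝ, (∃ x : Fin n → ℝ, (∀ i, 0 < x i) ∧ ∀ i, tapp T x i ≤ lam * x i ^ k) ∧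
      ∀ (mu : ℝ) (x : Fin n → ℝ), (∀ i, 0 < x i) → (∀ i, tapp T x i ≤ mu * x i ^ k) →
        lam ≤ mu := by
  have : Nonempty (Fin n) := ⟨⟨0, hn⟩⟩
  set C : ℝ := ∑ i, tapp T (fun _ => 1) i with hCdef
  have h1pos : ∀ i : Fin n, (0:ℝ) < (fun _ => 1 : Fin n → ℝ) i := fun _ => one_pos
  have hC : 0 ≤ C := Finset.sum_nonneg fun i _ => tapp_nonneg hT h1pos i
  obtain ⟨A, hA, hbd⟩ := bound_all hT hwi C hC
  let K : Set (ℝ × (Fin n → ℝ)) := (Set.Icc 0 C ×ˢ Set.Icc (fun _ => 1) (fun _ => A)) ∩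
    {p | ∀ i, tapp T p.2 i ≤ p.1 * p.2 i ^ k}
  have hK : IsCompact K := by
    refine (isCompact_Icc.prod isCompact_Icc).inter_right ?_
    have : {p : ℝ × (Fin n → ℝ) | ∀ i, tapp T p.2 i ≤ p.1 * p.2 i ^ k} =
        ⋂ i, {p | tapp T p.2 i ≤ p.1 * p.2 i ^ k} := by ext; simp
    rw [this]
    refine isClosed_iInter fun i => isClosed_le ((tapp_cont T i).comp continuous_snd) ?_
    fun_prop
  have hKne : K.Nonempty := by
    refine ⟨(C, fun _ => 1), ⟨⟨⟨hC, le_rfl⟩, ⟨le_rfl, fun _ => hA⟩⟩, fun i => ?_⟩⟩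
    simp only [one_pow, mul_one]
    exact Finset.single_le_sum (f := fun i => tapp T (fun _ => 1) i)
      (fun i _ => tapp_nonneg hT h1pos i) (Finset.mem_univ i)
  obtain ⟨⟨lam, x⟩, ⟨⟨hl, hx⟩, hlx⟩, hmin⟩ := hK.exists_isMinOn hKne continuous_fst.continuousOn
  refine ⟨lam, ⟨x, fun i => lt_of_lt_of_le one_pos (hx.1 i), hlx⟩, fun mu y hy hmy => ?_⟩
  by_cases hmu : mu ≤ C
  swap
  · exact hl.2.trans (not_le.1 hmu).le
  obtain ⟨i0, hi0⟩ := Finite.exists_min y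
  have hmu0 : 0 ≤ mu := by
    have h1 := (tapp_nonneg hT hy i0).trans (hmy i0)
    exact nonneg_of_mul_nonneg_left h1 (pow_pos (hy i0) k)
  set z : Fin n → ℝ := fun j => (y i0)⁻¹ * y j with hz
  have hz1 : ∀ i, 1 ≤ z i := fun i => by
    rw [hz]
    simp only
    rw [inv_mul_eq_div, one_le_div (hy i0)]
    exact hi0 i
  have hzmu : ∀ i, tapp T z i ≤ mu * z i ^ k := fun i => by
    rw [hz, tapp_smul]
    simp only [mul_pow]
    have := mul_le_mul_of_nonneg_left (hmy i) (pow_pos (inv_pos.2 (hy i0)) k).le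
    linarith
  have hzC : ∀ i, tapp T z i ≤ C * z i ^ k := fun i =>
    (hzmu i).trans (mul_le_mul_of_nonneg_right hmu (pow_nonneg (by linarith [hz1 i]) k))
  have hzK : (mu, z) ∈ K := ⟨⟨⟨hmu0, hmu⟩, ⟨hz1, hbd z hz1
    ⟨i0, inv_mul_cancel₀ (hy i0).ne'⟩ hzC⟩⟩, hzmu⟩
  exact hmin hzK

lemma exists_pair {T : Fin n → (Fin k → Fin n) → ℝ} (hn : 0 < n) (hT : TNonneg T)
    (hwi : MatIrreducible (repMat T)) :
    ∃ (lam : ℝ) (x : Fin n → ℝ), (∀ i, 0 < x i) ∧ ∀ i, tapp T x i = lam * x i ^ k := by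
  obtain ⟨lam, ⟨x0, hx0, hlx0⟩, hmin⟩ := exists_min hn hT hwi
  refine ⟨lam, ?_⟩
  have key : ∀ (s : ℕ) (x : Fin n → ℝ), (∀ i, 0 < x i) → (∀ i, tapp T x i ≤ lam * x i ^ k) →
      (Finset.univ.filter (fun i => tapp T x i = lam * x i ^ k)).card = s →
      ∃ x : Fin n → ℝ, (∀ i, 0 < x i) ∧ ∀ i, tapp T x i = lam * x i ^ k := by
    intro s
    induction s using Nat.strong_induction_on with
    | _ s ih =>
    intro x hx hlx hs
    set S := Finset.univ.filter (fun i => tapp T x i = lam * x i ^ k) with hS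
    have hmem : ∀ i, i ∈ S ↔ tapp T x i = lam * x i ^ k := fun i => by simp [hS]
    by_cases hU : S = Finset.univ
    · exact ⟨x, hx, fun i => (hmem i).1 (hU ▸ Finset.mem_univ i)⟩
    have hne : S.Nonempty := by
      by_contra hemp
      rw [Finset.not_nonempty_iff_eq_empty] at hemp
      have hlt : ∀ i, tapp T x i < lam * x i ^ k := fun i =>
        lt_of_le_of_ne (hlx i) fun h => by
          have := (hmem i).2 h
          simp [hemp] at this
      have hev : ∀ᶠ mu in nhdsWithin lam (Set.Iio lam), ∀ i, tapp T x i < mu * x i ^ k := by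
        rw [Filter.eventually_all]
        intro i
        have hc : Continuous fun mu : ℝ => mu * x i ^ k := by fun_prop
        exact (hc.continuousAt.eventually (lt_mem_nhds (hlt i))).filter_mono
          nhdsWithin_le_nhds
      obtain ⟨mu, h1, h2⟩ := (hev.and self_mem_nhdsWithin).exists
      exact absurd (hmin mu x hx fun i => (h1 i).le) (not_le.2 h2)
    have hev : ∀ᶠ d in nhdsWithin (1:ℝ) (Set.Iio 1),
        ∀ i, i ∉ S → tapp T x i < lam * (d * x i) ^ k := by
      rw [Filter.eventually_all]
      intro i
      by_cases hi : i ∈ S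
      · exact Filter.Eventually.of_forall fun d h => absurd hi h
      have hlt : tapp T x i < lam * ((1:ℝ) * x i) ^ k := by
        rw [one_mul]
        exact lt_of_le_of_ne (hlx i) fun h => hi ((hmem i).2 h)
      have hc : Continuous fun d : ℝ => lam * (d * x i) ^ k := by fun_prop
      filter_upwards [(hc.continuousAt.eventually (lt_mem_nhds hlt)).filter_mono
          nhdsWithin_le_nhds] with d hd _ using hd
    obtain ⟨d, hd, hd0, hd1⟩ := (hev.and (Ioo_mem_nhdsLT (zero_lt_one (α := ℝ)))).exists
    set z : Fin n → ℝ := fun i => if i ∈ S then x i else d * x i with hz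
    have hzS : ∀ i ∈ S, z i = x i := fun i hi => by simp [hz, hi]
    have hzN : ∀ i, i ∉ S → z i = d * x i := fun i hi => by simp [hz, hi]
    have hz0 : ∀ i, 0 < z i := fun i => by
      by_cases hi : i ∈ S
      · rw [hzS i hi]; exact hx i
      · rw [hzN i hi]; exact mul_pos hd0 (hx i)
    have hzx : ∀ i, z i ≤ x i := fun i => by
      by_cases hi : i ∈ S
      · rw [hzS i hi]
      · rw [hzN i hi]; nlinarith [hx i]
    have hstr : ∀ i, i ∉ S → tapp T z i < lam * z i ^ k := fun i hi => by
      rw [hzN i hi]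
      exact (tapp_mono hT hz0 hzx i).trans_lt (hd i hi)
    have hlz : ∀ i, tapp T z i ≤ lam * z i ^ k := fun i => by
      by_cases hi : i ∈ S
      · rw [hzS i hi]
        exact (tapp_mono hT hz0 hzx i).trans (hlx i)
      · exact (hstr i hi).le
    obtain ⟨i, hi, β, hβ, l, hl⟩ := wi_edge hT hwi S hne hU
    have hsi : tapp T z i < lam * z i ^ k := by
      rw [hzS i hi]
      refine lt_of_lt_of_le (tapp_strict hT hz0 hzx i β hβ l ?_) (hlx i)
      rw [hzN _ hl]; nlinarith [hx (β l)]
    refine ih _ ?_ z hz0 hlz rfl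
    rw [← hs]
    refine Finset.card_lt_card ?_
    refine (Finset.ssubset_iff_of_subset fun j hj => ?_).2 ⟨i, hi, fun h => ?_⟩
    · by_contra hjS
      exact (hstr j hjS).ne (Finset.mem_filter.1 hj).2
    · exact hsi.ne (Finset.mem_filter.1 h).2
  exact key _ x0 hx0 hlx0 rfl

lemma eig_le {T : Fin n → (Fin k → Fin n) → ℝ} (hn : 0 < n) (hT : TNonneg T)
    {lam mu : ℝ} {x y : Fin n → ℝ} (hx : ∀ i, 0 < x i) (hy : ∀ i, 0 < y i)
    (hlx : ∀ i, tapp T x i = lam * x i ^ k) (hmy : ∀ i, tapp T y i = mu * y i ^ k) :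
    ∃ c : ℝ, 0 < c ∧ (∀ i, c * x i ≤ y i) ∧ (∃ i, c * x i = y i) ∧ lam ≤ mu := by
  have : Nonempty (Fin n) := ⟨⟨0, hn⟩⟩
  obtain ⟨i0, hi0⟩ := Finite.exists_min (fun i => y i / x i)
  have hc : 0 < y i0 / x i0 := div_pos (hy i0) (hx i0)
  have hle : ∀ i, y i0 / x i0 * x i ≤ y i := fun i => (le_div_iff₀ (hx i)).1 (hi0 i)
  have heq : y i0 / x i0 * x i0 = y i0 := div_mul_cancel₀ _ (hx i0).ne'
  refine ⟨y i0 / x i0, hc, hle, ⟨i0, heq⟩, ?_⟩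
  have h1 := tapp_mono hT (fun i => mul_pos hc (hx i)) hle i0
  rw [tapp_smul, hlx, hmy] at h1
  have h2 : (y i0 / x i0) ^ k * (lam * x i0 ^ k) = lam * y i0 ^ k := by
    conv_rhs => rw [← heq, mul_pow]
    ring
  rw [h2] at h1
  exact le_of_mul_le_mul_right h1 (pow_pos (hy i0) k)

lemma eig_unique {T : Fin n → (Fin k → Fin n) → ℝ} (hn : 0 < n) (hT : TNonneg T)
    (hwi : MatIrreducible (repMat T))
    {lam mu : ℝ} {x y : Fin n → ℝ} (hx : ∀ i, 0 < x i) (hy : ∀ i, 0 < y i)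
    (hlx : ∀ i, tapp T x i = lam * x i ^ k) (hmy : ∀ i, tapp T y i = mu * y i ^ k) :
    mu = lam ∧ ∃ c : ℝ, 0 < c ∧ y = fun i => c * x i := by
  obtain ⟨c, hc, hle, ⟨i0, hi0⟩, h1⟩ := eig_le hn hT hx hy hlx hmy
  obtain ⟨_, _, _, _, h2⟩ := eig_le hn hT hy hx hmy hlx
  have hml : mu = lam := le_antisymm h2 h1
  refine ⟨hml, c, hc, ?_⟩
  subst hml
  set I := Finset.univ.filter (fun i => c * x i = y i) with hI
  have hmem : ∀ i, i ∈ I ↔ c * x i = y i := fun i => by simp [hI]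
  by_cases hU : I = Finset.univ
  · funext i
    exact ((hmem i).1 (hU ▸ Finset.mem_univ i)).symm
  exfalso
  obtain ⟨i, hi, β, hβ, l, hl⟩ := wi_edge hT hwi I ⟨i0, (hmem i0).2 hi0⟩ hU
  have h := tapp_strict hT (fun i => mul_pos hc (hx i)) hle i β hβ l
    (lt_of_le_of_ne (hle _) fun h => hl ((hmem _).2 h))
  rw [tapp_smul, hlx, hmy, ← (hmem i).1 hi, mul_pow] at h
  linarith

end Helpers

theorem weakly_irreducible_unique_positive_eigenpair
    (m n : ℕ) (hm : 2 ≤ m) (hn : 2 ≤ n)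
    (T : Fin n → (Fin (m - 1) → Fin n) → ℝ) (hT : TNonneg T)
    (hwi : MatIrreducible (repMat T)) :
    ∃ (lam : ℝ) (x : Fin n → ℝ), (∀ i, 0 < x i) ∧
      (∀ i, tapp T x i = lam * x i ^ (m - 1)) ∧
      ∀ (mu : ℝ) (y : Fin n → ℝ), (∀ i, 0 < y i) →
        (∀ i, tapp T y i = mu * y i ^ (m - 1)) →
        mu = lam ∧ ∃ c : ℝ, 0 < c ∧ y = fun i => c * x i := by
  obtain ⟨lam, x, hx, hlx⟩ := exists_pair (by omega) hT hwi
  exact ⟨lam, x, hx, hlx, fun mu y hy hmy =>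
    eig_unique (by omega) hT hwi hx hy hlx hmy⟩
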